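/- Let p be a prime and let g(x) = b_e x^e + ⋯ + b_0 ∈ ℚ[x] have degree e ≥ 1 with b_0 ≠ 0, ν_p(b_e) = 0, and ν_p(b_i) ≥ 1 for every 0 ≤ i ≤ e−1 with b_i ≠ 0. Suppose NP_p(g) has successive vertices (0,0), (e−m_1, r_1), …, (e−m_{t−1}, r_{t−1}), (e, r_t), where e = m_0 > m_1 > ⋯ > m_t = 0 and r_i = ν_p(b_{m_i}), and set λ_1 = r_1/(e−m_1). Assume r_t ≤ λ_1(2e−1) and, in addition, gcd(e·(m_s − m_{s+1}), r_{s+1} − r_s) = 1 for every 0 ≤ s < t. Then for every integer n ≥ 1 the number of irreducible factors of the n-th iterate g^n(x) over ℚ, counted with multiplicity, is at most t. -/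

import Mathlib

open Polynomial

/-- The `n`-th compositional iterate of `f`: `f^0 = X`, `f^{n+1} = f ∘ f^n`. -/
noncomputable def polyIter (f : Polynomial ℚ) : ℕ → Polynomial ℚ
  | 0 => Polynomial.X
  | n + 1 => f.comp (polyIter f n)

/-- The `p`-adic valuation of a rational number, viewed as a rational number. -/
def nuQ (p : ℕ) (x : ℚ) : ℚ := (padicValRat p x : ℚ)

/-- `NP_p(h)` has successive vertices `(xs 0, ys 0), …, (xs t, ys t)`:
the corresponding coefficients are nonzero and have the prescribed valuations,
the slopes are strictly increasing, and every point of the Newton diagram lies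
on or above the polygon. -/
def HasNPVertices (p : ℕ) (h : Polynomial ℚ) (t : ℕ) (xs : ℕ → ℕ) (ys : ℕ → ℚ) : Prop :=
  h.coeff 0 ≠ 0 ∧
  xs 0 = 0 ∧ xs t = h.natDegree ∧
  (∀ s, s < t → xs s < xs (s + 1)) ∧
  (∀ s, s ≤ t → h.coeff (h.natDegree - xs s) ≠ 0 ∧
      nuQ p (h.coeff (h.natDegree - xs s)) = ys s) ∧
  (∀ s, 1 ≤ s → s < t →
      (ys s - ys (s - 1)) / ((xs s : ℚ) - (xs (s - 1) : ℚ)) <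
        (ys (s + 1) - ys s) / ((xs (s + 1) : ℚ) - (xs s : ℚ))) ∧
  (∀ s, 1 ≤ s → s ≤ t → ∀ i, h.coeff i ≠ 0 →
      xs (s - 1) ≤ h.natDegree - i → h.natDegree - i ≤ xs s →
      ys (s - 1) + ((ys s - ys (s - 1)) / ((xs s : ℚ) - (xs (s - 1) : ℚ))) *
          (((h.natDegree - i : ℕ) : ℚ) - (xs (s - 1) : ℚ)) ≤ nuQ p (h.coeff i))

/-- The number of irreducible factors of a polynomial over `ℚ`,
counted with multiplicity. -/
noncomputable def numFactors (P : Polynomial ℚ) : ℕ :=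
  (UniqueFactorizationMonoid.factors P).card

/-- `f` is `p^r`-pure. -/
def IsPpure (p r : ℕ) (f : Polynomial ℚ) : Prop :=
  f.coeff 0 ≠ 0 ∧
  padicValRat p f.leadingCoeff = 0 ∧
  padicValRat p (f.coeff 0) = (r : ℤ) ∧
  ∀ i, 0 < i → i < f.natDegree → f.coeff i ≠ 0 →
    (r : ℚ) / (f.natDegree : ℚ) ≤ nuQ p (f.coeff i) / ((f.natDegree : ℚ) - (i : ℚ))

/-!
Giving the variable a value `ρ` turns each term of a polynomial into a value, and the degrees of the
terms of maximal value are those on the edge of the Newton polygon whose slope corresponds to `ρ`.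
Two such edges add up under multiplication of polynomials (Dumas), so the polygon of `f * g` is
glued together from those of `f` and `g`.

Let `μ_0 < ⋯ < μ_{t-1}` be the slopes of the polygon of `g` and `e` its degree. As long as a slope
`μ` satisfies `μ < e * μ_0`, replacing `f` by `f ∘ g` turns an edge of slope `μ` into one of slope
`μ / e` which is `e` times as wide. The bound on the last vertex together with coprimality gives
`μ_s < e * μ_0` for all `s`, so the polygon of the `(n + 1)`-st iterate has `t` edges, of widths
`e ^ n * (m_s - m_{s+1})`. By coprimality each edge of a factor is as wide as the whole edge of that
slope or has width zero, and every nonconstant factor has an edge of positive width.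
-/

section NewtonEdge

variable {R Γ₀ : Type*} [CommRing R] [LinearOrderedCommGroupWithZero Γ₀]
  {v : Valuation R Γ₀} {ρ σ : Γ₀} {f g : R[X]} {i j k l n : ℕ}

theorem valuation_sum_mul_le {ι : Type*} {S : Finset ι} {F : ι → R} {r c : Γ₀}
    (h : ∀ i ∈ S, v (F i) * r ≤ c) : v (∑ i ∈ S, F i) * r ≤ c := by
  rcases (zero_le : 0 ≤ r).eq_or_lt with rfl | hr
  · simp
  · rw [← le_div_iff₀ hr]
    exact v.map_sum_le fun i hi => (le_div_iff₀ hr).mpr (h i hi)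

theorem valuation_sum_mul_lt {ι : Type*} {S : Finset ι} {F : ι → R} {r c : Γ₀} (hc : 0 < c)
    (h : ∀ i ∈ S, v (F i) * r < c) : v (∑ i ∈ S, F i) * r < c := by
  rcases (zero_le : 0 ≤ r).eq_or_lt with rfl | hr
  · simpa using hc
  · rw [← lt_div_iff₀ hr]
    exact v.map_sum_lt (div_pos hc hr).ne' fun i hi => (lt_div_iff₀ hr).mpr (h i hi)

theorem valuation_sum_mul_eq {ι : Type*} {S : Finset ι} {F : ι → R} {r : Γ₀} {a : ι} (ha : a ∈ S)
    (h : ∀ i ∈ S, i ≠ a → v (F i) * r < v (F a) * r) : v (∑ i ∈ S, F i) * r = v (F a) * r := by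
  classical
  rw [v.map_sum_eq_of_lt ha fun i hi => ?_]
  rw [Finset.mem_sdiff, Finset.mem_singleton] at hi
  exact lt_of_mul_lt_mul_right (h i hi.1 hi.2) zero_le

/-- The value of the term of degree `i` of `f` when the variable is given the value `ρ`. For the
`p`-adic valuation and `ρ = p ^ (-μ)` this is `p ^ (-(ν_p(c_i) + μ * i))`. -/
def termValue (v : Valuation R Γ₀) (ρ : Γ₀) (f : R[X]) (i : ℕ) : Γ₀ :=
  v (f.coeff i) * ρ ^ i

/-- The degrees of the terms of maximal value, that is, of those points of the Newton diagram which
lie on the supporting line of the Newton polygon whose slope is given by `ρ`; usually this is one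
point, and it is a whole edge if `ρ` is the slope of an edge. Positivity of the maximal value
excludes `f = 0` and `ρ = 0`. -/
def newtonEdge (v : Valuation R Γ₀) (ρ : Γ₀) (f : R[X]) : Set ℕ :=
  {k | 0 < termValue v ρ f k ∧ ∀ i, termValue v ρ f i ≤ termValue v ρ f k}

theorem coeff_ne_zero_of_mem_newtonEdge (hk : k ∈ newtonEdge v ρ f) : f.coeff k ≠ 0 := by
  intro h
  simpa [termValue, h] using hk.1

theorem le_natDegree_of_mem_newtonEdge (hk : k ∈ newtonEdge v ρ f) : k ≤ f.natDegree :=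
  le_natDegree_of_ne_zero (coeff_ne_zero_of_mem_newtonEdge hk)

theorem termValue_lt_of_notMem_newtonEdge (hk : k ∈ newtonEdge v ρ f)
    (hi : i ∉ newtonEdge v ρ f) : termValue v ρ f i < termValue v ρ f k := by
  contrapose! hi
  exact ⟨hk.1.trans_le hi, fun j => (hk.2 j).trans hi⟩

theorem termValue_lt_of_mem_newtonEdge (hσ : σ < ρ) (hk : k ∈ newtonEdge v σ f) (hi : i < k) :
    termValue v ρ f i < termValue v ρ f k := by
  obtain ⟨d, rfl⟩ := Nat.exists_eq_add_of_lt hi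
  obtain ⟨hpos, hmax⟩ := hk
  simp only [termValue, add_assoc, pow_add _ i] at hpos hmax ⊢
  have hc : 0 < v (f.coeff (i + (d + 1))) := pos_of_mul_pos_left hpos zero_le
  have hσi : 0 < σ ^ i := pos_of_mul_pos_left (pos_of_mul_pos_right hpos zero_le) zero_le
  have hρi : 0 < ρ ^ i := hσi.trans_le (pow_le_pow_left₀ zero_le hσ.le i)
  have hle : v (f.coeff i) ≤ v (f.coeff (i + (d + 1))) * σ ^ (d + 1) :=
    le_of_mul_le_mul_right ((hmax i).trans_eq (by rw [mul_right_comm, mul_assoc])) hσi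
  calc v (f.coeff i) * ρ ^ i
      ≤ v (f.coeff (i + (d + 1))) * σ ^ (d + 1) * ρ ^ i := by gcongr
    _ < v (f.coeff (i + (d + 1))) * ρ ^ (d + 1) * ρ ^ i := by
        have : σ ^ (d + 1) < ρ ^ (d + 1) := pow_lt_pow_left₀ hσ zero_le d.succ_ne_zero
        gcongr
    _ = v (f.coeff (i + (d + 1))) * (ρ ^ i * ρ ^ (d + 1)) := by
        rw [mul_assoc, mul_comm (ρ ^ (d + 1))]

theorem le_of_mem_newtonEdge (hσ : σ < ρ) (hk : k ∈ newtonEdge v σ f)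
    (hl : l ∈ newtonEdge v ρ f) : k ≤ l :=
  not_lt.mp fun h => (termValue_lt_of_mem_newtonEdge hσ hk h).not_ge (hl.2 k)

theorem map_mul_coeff_mul_pow {x : ℕ × ℕ}
    (hx : x ∈ Finset.HasAntidiagonal.antidiagonal n) :
    v (f.coeff x.1 * g.coeff x.2) * ρ ^ n = termValue v ρ f x.1 * termValue v ρ g x.2 := by
  rw [← Finset.HasAntidiagonal.mem_antidiagonal.mp hx, map_mul, pow_add, termValue, termValue,
    mul_mul_mul_comm]

theorem termValue_mul_le {a b : Γ₀} (hf : ∀ i, termValue v ρ f i ≤ a)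
    (hg : ∀ i, termValue v ρ g i ≤ b) (n : ℕ) : termValue v ρ (f * g) n ≤ a * b := by
  rw [termValue, coeff_mul]
  refine valuation_sum_mul_le fun x hx => ?_
  rw [map_mul_coeff_mul_pow hx]
  exact mul_le_mul' (hf _) (hg _)

theorem termValue_mul_termValue_lt (hk : k ∈ newtonEdge v ρ f) (hl : l ∈ newtonEdge v ρ g)
    (h : i ∈ newtonEdge v ρ f → j ∉ newtonEdge v ρ g) :
    termValue v ρ f i * termValue v ρ g j < termValue v ρ f k * termValue v ρ g l := by
  by_cases hi : i ∈ newtonEdge v ρ f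
  · exact mul_lt_mul_of_le_of_lt_of_pos_of_nonneg (hk.2 i)
      (termValue_lt_of_notMem_newtonEdge hl (h hi)) hi.1 zero_le
  · exact mul_lt_mul_of_lt_of_le_of_nonneg_of_pos (termValue_lt_of_notMem_newtonEdge hk hi)
      (hl.2 j) zero_le hl.1

theorem termValue_mul_lt (hk : k ∈ newtonEdge v ρ f) (hl : l ∈ newtonEdge v ρ g)
    (hn : ∀ i ∈ newtonEdge v ρ f, ∀ j ∈ newtonEdge v ρ g, i + j ≠ n) :
    termValue v ρ (f * g) n < termValue v ρ f k * termValue v ρ g l := by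
  rw [termValue, coeff_mul]
  refine valuation_sum_mul_lt (mul_pos hk.1 hl.1) fun x hx => ?_
  rw [map_mul_coeff_mul_pow hx]
  exact termValue_mul_termValue_lt hk hl fun hi hj =>
    hn _ hi _ hj (Finset.HasAntidiagonal.mem_antidiagonal.mp hx)

theorem termValue_mul_eq (hk : k ∈ newtonEdge v ρ f) (hl : l ∈ newtonEdge v ρ g)
    (huniq : ∀ i ∈ newtonEdge v ρ f, ∀ j ∈ newtonEdge v ρ g, i + j = k + l → i = k) :
    termValue v ρ (f * g) (k + l) = termValue v ρ f k * termValue v ρ g l := by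
  have hkl : (k, l) ∈ Finset.HasAntidiagonal.antidiagonal (k + l) :=
    Finset.HasAntidiagonal.mem_antidiagonal.mpr rfl
  rw [termValue, coeff_mul, valuation_sum_mul_eq hkl fun x hx hne => ?_, map_mul_coeff_mul_pow hkl]
  rw [map_mul_coeff_mul_pow hx, map_mul_coeff_mul_pow hkl]
  refine termValue_mul_termValue_lt hk hl fun hi hj => hne ?_
  have hsum := Finset.HasAntidiagonal.mem_antidiagonal.mp hx
  have hxk := huniq _ hi _ hj hsum
  exact Prod.ext hxk (by omega)

theorem add_mem_newtonEdge_mul (hk : k ∈ newtonEdge v ρ f) (hl : l ∈ newtonEdge v ρ g)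
    (huniq : ∀ i ∈ newtonEdge v ρ f, ∀ j ∈ newtonEdge v ρ g, i + j = k + l → i = k) :
    k + l ∈ newtonEdge v ρ (f * g) := by
  rw [newtonEdge, Set.mem_ofPred_eq, termValue_mul_eq hk hl huniq]
  exact ⟨mul_pos hk.1 hl.1, termValue_mul_le hk.2 hl.2⟩

theorem exists_add_eq_of_mem_newtonEdge_mul (hk : k ∈ newtonEdge v ρ f)
    (hl : l ∈ newtonEdge v ρ g)
    (huniq : ∀ i ∈ newtonEdge v ρ f, ∀ j ∈ newtonEdge v ρ g, i + j = k + l → i = k)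
    (hn : n ∈ newtonEdge v ρ (f * g)) :
    ∃ i ∈ newtonEdge v ρ f, ∃ j ∈ newtonEdge v ρ g, i + j = n := by
  by_contra! h
  refine (hn.2 (k + l)).not_gt ?_
  rw [termValue_mul_eq hk hl huniq]
  exact termValue_mul_lt hk hl h

theorem isGreatest_newtonEdge_mul (hk : IsGreatest (newtonEdge v ρ f) k)
    (hl : IsGreatest (newtonEdge v ρ g) l) : IsGreatest (newtonEdge v ρ (f * g)) (k + l) := by
  have huniq : ∀ i ∈ newtonEdge v ρ f, ∀ j ∈ newtonEdge v ρ g, i + j = k + l → i = k :=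
    fun i hi j hj hij => by linarith [hk.2 hi, hl.2 hj]
  refine ⟨add_mem_newtonEdge_mul hk.1 hl.1 huniq, fun n hn => ?_⟩
  obtain ⟨i, hi, j, hj, rfl⟩ := exists_add_eq_of_mem_newtonEdge_mul hk.1 hl.1 huniq hn
  exact add_le_add (hk.2 hi) (hl.2 hj)

theorem isLeast_newtonEdge_mul (hk : IsLeast (newtonEdge v ρ f) k)
    (hl : IsLeast (newtonEdge v ρ g) l) : IsLeast (newtonEdge v ρ (f * g)) (k + l) := by
  have huniq : ∀ i ∈ newtonEdge v ρ f, ∀ j ∈ newtonEdge v ρ g, i + j = k + l → i = k :=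
    fun i hi j hj hij => by linarith [hk.2 hi, hl.2 hj]
  refine ⟨add_mem_newtonEdge_mul hk.1 hl.1 huniq, fun n hn => ?_⟩
  obtain ⟨i, hi, j, hj, rfl⟩ := exists_add_eq_of_mem_newtonEdge_mul hk.1 hl.1 huniq hn
  exact add_le_add (hk.2 hi) (hl.2 hj)

theorem termValue_pow_le {a : Γ₀} (hf : ∀ i, termValue v ρ f i ≤ a) (j i : ℕ) :
    termValue v ρ (f ^ j) i ≤ a ^ j := by
  induction j generalizing i with
  | zero =>
    rcases eq_or_ne i 0 with rfl | hi
    · simp [termValue]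
    · simp [termValue, coeff_one, hi]
  | succ j ih =>
    rw [pow_succ, pow_succ]
    exact termValue_mul_le ih hf i

theorem termValue_pow_natDegree_mul (h : v f.leadingCoeff = 1) (j : ℕ) :
    termValue v ρ (f ^ j) (f.natDegree * j) = (ρ ^ f.natDegree) ^ j := by
  rw [termValue, pow_mul, mul_comm f.natDegree, coeff_pow_mul_natDegree, map_pow, h,
    one_pow, one_mul]

theorem natDegree_mul_mem_newtonEdge_pow (hg : g.natDegree ∈ newtonEdge v ρ g)
    (h1 : v g.leadingCoeff = 1) (j : ℕ) : g.natDegree * j ∈ newtonEdge v ρ (g ^ j) := by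
  have hval : termValue v ρ g g.natDegree = ρ ^ g.natDegree := by
    rw [termValue, coeff_natDegree, h1, one_mul]
  rw [newtonEdge, Set.mem_ofPred_eq, termValue_pow_natDegree_mul h1, ← hval]
  exact ⟨pow_pos hg.1 j, termValue_pow_le hg.2 j⟩

theorem termValue_pow_lt (hg : g.natDegree ∈ newtonEdge v σ g) (h1 : v g.leadingCoeff = 1)
    (hσ : σ < ρ) (hi : i ≠ g.natDegree * j) :
    termValue v ρ (g ^ j) i < (ρ ^ g.natDegree) ^ j := by
  rcases hi.lt_or_gt with hlt | hgt
  · rw [← termValue_pow_natDegree_mul h1]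
    exact termValue_lt_of_mem_newtonEdge hσ (natDegree_mul_mem_newtonEdge_pow hg h1 j) hlt
  · have hdeg : (g ^ j).natDegree < i := natDegree_pow_le.trans_lt (by rwa [mul_comm])
    rw [termValue, coeff_eq_zero_of_natDegree_lt hdeg, map_zero, zero_mul]
    exact pow_pos (pow_pos (zero_le.trans_lt hσ) _) _

theorem termValue_C_mul_pow_lt (hg : g.natDegree ∈ newtonEdge v σ g)
    (h1 : v g.leadingCoeff = 1) (hσ : σ < ρ) (hk : k ∈ newtonEdge v (ρ ^ g.natDegree) f)
    (hi : i ≠ g.natDegree * j) :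
    termValue v ρ (C (f.coeff j) * g ^ j) i < termValue v (ρ ^ g.natDegree) f k := by
  rw [termValue, coeff_C_mul, map_mul, mul_assoc]
  rcases (zero_le : 0 ≤ v (f.coeff j)).eq_or_lt with h0 | hpos
  · simpa [← h0] using hk.1
  · exact (mul_lt_mul_of_pos_left (termValue_pow_lt hg h1 hσ hi) hpos).trans_le (hk.2 j)

theorem termValue_C_mul_pow_natDegree_mul (h1 : v g.leadingCoeff = 1) (j : ℕ) :
    termValue v ρ (C (f.coeff j) * g ^ j) (g.natDegree * j) =
      termValue v (ρ ^ g.natDegree) f j := by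
  rw [termValue, coeff_C_mul, map_mul, mul_assoc, ← termValue, termValue_pow_natDegree_mul h1,
    termValue]

theorem termValue_C_mul_pow_le (hg : g.natDegree ∈ newtonEdge v σ g)
    (h1 : v g.leadingCoeff = 1) (hσ : σ < ρ) (hk : k ∈ newtonEdge v (ρ ^ g.natDegree) f)
    (i j : ℕ) :
    termValue v ρ (C (f.coeff j) * g ^ j) i ≤ termValue v (ρ ^ g.natDegree) f k := by
  rcases eq_or_ne i (g.natDegree * j) with rfl | hi
  · exact (termValue_C_mul_pow_natDegree_mul h1 j).trans_le (hk.2 j)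
  · exact (termValue_C_mul_pow_lt hg h1 hσ hk hi).le

-- Every edge of `g` is at least as steep as the one given by `σ`, so for `ρ > σ` the monomial of
-- top degree dominates each power `g ^ j`, and `g` acts like `X ^ g.natDegree`.
theorem natDegree_mul_mem_newtonEdge_comp (hg : g.natDegree ∈ newtonEdge v σ g)
    (h1 : v g.leadingCoeff = 1) (hg0 : 0 < g.natDegree) (hσ : σ < ρ)
    (hk : k ∈ newtonEdge v (ρ ^ g.natDegree) f) :
    g.natDegree * k ∈ newtonEdge v ρ (f.comp g) := by
  have hcoeff : ∀ n, (f.comp g).coeff n = ∑ j ∈ f.support, (C (f.coeff j) * g ^ j).coeff n :=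
    fun n => by rw [comp_eq_sum_left, sum_def, finsetSum_coeff]
  have hk0 : k ∈ f.support := mem_support_iff.mpr (coeff_ne_zero_of_mem_newtonEdge hk)
  have hval : termValue v ρ (f.comp g) (g.natDegree * k) = termValue v (ρ ^ g.natDegree) f k := by
    rw [← termValue_C_mul_pow_natDegree_mul h1, termValue, hcoeff]
    refine valuation_sum_mul_eq hk0 fun j _ hj => ?_
    exact (termValue_C_mul_pow_lt hg h1 hσ hk fun h =>
      hj (Nat.eq_of_mul_eq_mul_left hg0 h).symm).trans_eq
        (termValue_C_mul_pow_natDegree_mul h1 k).symm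
  rw [newtonEdge, Set.mem_ofPred_eq, hval]
  refine ⟨hk.1, fun n => ?_⟩
  rw [termValue, hcoeff]
  exact valuation_sum_mul_le fun j _ => termValue_C_mul_pow_le hg h1 hσ hk n j

end NewtonEdge

section NewtonChain

variable {K Γ₀ : Type*} [Field K] [LinearOrderedCommGroupWithZero Γ₀] {v : Valuation K Γ₀}

section Edge

variable {ρ : Γ₀} {f : K[X]} {d k l : ℕ}

theorem newtonEdge_nonempty (hρ : 0 < ρ) (hf : f ≠ 0) : (newtonEdge v ρ f).Nonempty := by
  obtain ⟨k, hk, hmax⟩ :=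
    f.support.exists_max_image (termValue v ρ f) (nonempty_support_iff.mpr hf)
  have hpos : 0 < termValue v ρ f k :=
    mul_pos (v.pos_iff.mpr (mem_support_iff.mp hk)) (pow_pos hρ k)
  refine ⟨k, hpos, fun i => ?_⟩
  by_cases hi : i ∈ f.support
  · exact hmax i hi
  · simp [termValue, notMem_support_iff.mp hi]

theorem exists_isLeast_newtonEdge (hρ : 0 < ρ) (hf : f ≠ 0) :
    ∃ k, IsLeast (newtonEdge v ρ f) k :=
  ⟨_, isLeast_csInf (newtonEdge_nonempty hρ hf)⟩

theorem exists_isGreatest_newtonEdge (hρ : 0 < ρ) (hf : f ≠ 0) :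
    ∃ k, IsGreatest (newtonEdge v ρ f) k :=
  BddAbove.exists_isGreatest_of_nonempty ⟨_, fun _ => le_natDegree_of_mem_newtonEdge⟩
    (newtonEdge_nonempty hρ hf)

theorem dvd_sub_of_mem_newtonEdge (hd : ∀ (x : K) (n : ℕ), v x = ρ ^ n → d ∣ n)
    (hk : k ∈ newtonEdge v ρ f) (hl : l ∈ newtonEdge v ρ f) (hlk : l ≤ k) : d ∣ k - l := by
  refine hd (f.coeff l / f.coeff k) (k - l) ?_
  obtain ⟨n, rfl⟩ := Nat.exists_eq_add_of_le hlk
  have hv : v (f.coeff l) * ρ ^ l = v (f.coeff (l + n)) * ρ ^ n * ρ ^ l := by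
    rw [mul_assoc, ← pow_add, add_comm n]
    exact (hk.2 l).antisymm (hl.2 (l + n))
  have hρl : ρ ^ l ≠ 0 := (pos_of_mul_pos_right hl.1 zero_le).ne'
  rw [Nat.add_sub_cancel_left, map_div₀,
    div_eq_iff (v.ne_zero_iff.mpr (coeff_ne_zero_of_mem_newtonEdge hk)), mul_comm (ρ ^ n)]
  exact mul_right_cancel₀ hρl hv

end Edge

/-- The Newton polygon of `f` has no edges besides those of slopes `ρ 0, …, ρ (t - 1)`, and the
degrees at its successive vertices are `M 0, …, M t`, from the leading to the constant term.
Equalities `M s = M (s + 1)` are allowed: then `ρ s` is not the slope of an edge. In this way the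
polygons of the factors of `f` can be described by the slopes occurring for `f`. -/
structure IsNewtonChain (v : Valuation K Γ₀) (ρ : ℕ → Γ₀) (t : ℕ) (f : K[X]) (M : ℕ → ℕ) :
    Prop where
  pos : ∀ s < t, 0 < ρ s
  anti : ∀ s, s + 1 < t → ρ (s + 1) < ρ s
  zero : M 0 = f.natDegree
  last : M t = 0
  left_mem : ∀ s < t, M s ∈ newtonEdge v (ρ s) f
  right_mem : ∀ s < t, M (s + 1) ∈ newtonEdge v (ρ s) f

namespace IsNewtonChain

variable {ρ τ : ℕ → Γ₀} {σ : Γ₀} {t s : ℕ} {f g : K[X]} {M d : ℕ → ℕ}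

theorem isLeast (h : IsNewtonChain v ρ t f M) (hs : s < t) :
    IsLeast (newtonEdge v (ρ s) f) (M (s + 1)) := by
  refine ⟨h.right_mem s hs, fun l hl => ?_⟩
  rcases (Nat.succ_le_of_lt hs).eq_or_lt with rfl | hst
  · exact h.last.trans_le l.zero_le
  · exact le_of_mem_newtonEdge (h.anti s hst) (h.left_mem (s + 1) hst) hl

theorem le_of_mem_of_isLeast (hρ : ∀ s, s + 1 < t → ρ (s + 1) < ρ s) (h0 : M 0 = f.natDegree)
    (hM : ∀ s < t, IsLeast (newtonEdge v (ρ s) f) (M (s + 1))) (hs : s < t) {k : ℕ}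
    (hk : k ∈ newtonEdge v (ρ s) f) : k ≤ M s := by
  cases s with
  | zero => exact (le_natDegree_of_mem_newtonEdge hk).trans_eq h0.symm
  | succ s => exact le_of_mem_newtonEdge (hρ s hs) hk (hM s (s.lt_succ_self.trans hs)).1

theorem isGreatest (h : IsNewtonChain v ρ t f M) (hs : s < t) :
    IsGreatest (newtonEdge v (ρ s) f) (M s) :=
  ⟨h.left_mem s hs, fun _ => le_of_mem_of_isLeast h.anti h.zero (fun _ => h.isLeast) hs⟩

theorem succ_le (h : IsNewtonChain v ρ t f M) (hs : s < t) : M (s + 1) ≤ M s :=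
  (h.isGreatest hs).2 (h.right_mem s hs)

theorem exists_isLeast (hρ : ∀ s < t, 0 < ρ s) (hf : f ≠ 0) :
    ∃ a : ℕ → ℕ, a 0 = f.natDegree ∧ ∀ s < t, IsLeast (newtonEdge v (ρ s) f) (a (s + 1)) := by
  choose! k hk using fun s hs => exists_isLeast_newtonEdge (v := v) (hρ s hs) hf
  exact ⟨fun s => Nat.casesOn s f.natDegree k, rfl, hk⟩

theorem exists_of_mul (hf : f ≠ 0) (hg : g ≠ 0) (h : IsNewtonChain v ρ t (f * g) M) :
    ∃ a b, IsNewtonChain v ρ t f a ∧ IsNewtonChain v ρ t g b ∧ ∀ s ≤ t, M s = a s + b s := by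
  obtain ⟨a, ha0, ha⟩ := exists_isLeast h.pos hf
  obtain ⟨b, hb0, hb⟩ := exists_isLeast h.pos hg
  have hsum : ∀ s ≤ t, M s = a s + b s := by
    rintro (_ | s) hs
    · rw [h.zero, ha0, hb0, natDegree_mul hf hg]
    · exact (h.isLeast hs).unique (isLeast_newtonEdge_mul (ha s hs) (hb s hs))
  have hmem : ∀ s < t, a s ∈ newtonEdge v (ρ s) f ∧ b s ∈ newtonEdge v (ρ s) g := by
    intro s hs
    obtain ⟨k, hk⟩ := exists_isGreatest_newtonEdge (v := v) (h.pos s hs) hf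
    obtain ⟨l, hl⟩ := exists_isGreatest_newtonEdge (v := v) (h.pos s hs) hg
    have hka := le_of_mem_of_isLeast h.anti ha0 ha hs hk.1
    have hlb := le_of_mem_of_isLeast h.anti hb0 hb hs hl.1
    have hkl := (h.isGreatest hs).unique (isGreatest_newtonEdge_mul hk hl)
    have hMs := hsum s hs.le
    obtain rfl : k = a s := by omega
    obtain rfl : l = b s := by omega
    exact ⟨hk.1, hl.1⟩
  have hlast : a t + b t = 0 := (hsum t le_rfl).symm.trans h.last
  exact ⟨a, b,
    ⟨h.pos, h.anti, ha0, (add_eq_zero.mp hlast).1, fun s hs => (hmem s hs).1,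
      fun s hs => (ha s hs).1⟩,
    ⟨h.pos, h.anti, hb0, (add_eq_zero.mp hlast).2, fun s hs => (hmem s hs).2,
      fun s hs => (hb s hs).1⟩, hsum⟩

theorem dvd_sub (h : IsNewtonChain v ρ t f M) (hs : s < t)
    (hd : ∀ (x : K) (n : ℕ), v x = ρ s ^ n → d s ∣ n) : d s ∣ M s - M (s + 1) :=
  dvd_sub_of_mem_newtonEdge hd (h.left_mem s hs) (h.right_mem s hs) (h.succ_le hs)

theorem one_le_sum_div (h : IsNewtonChain v ρ t f M) (hf : 0 < f.natDegree)
    (hd : ∀ s < t, ∀ (x : K) (n : ℕ), v x = ρ s ^ n → d s ∣ n) :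
    1 ≤ ∑ s ∈ Finset.range t, (M s - M (s + 1)) / d s := by
  by_contra! hlt
  have hle : ∀ s < t, M s ≤ M (s + 1) := by
    intro s hs
    have hq := Finset.sum_eq_zero_iff.mp (Nat.lt_one_iff.mp hlt) s (Finset.mem_range.mpr hs)
    have hw := Nat.div_mul_cancel (h.dvd_sub hs (hd s hs))
    rw [hq, zero_mul] at hw
    exact Nat.sub_eq_zero_iff_le.mp hw.symm
  have hmono : MonotoneOn M (Set.Iic t) :=
    monotoneOn_of_le_add_one Set.ordConnected_Iic fun s _ _ hs => hle s hs
  have hM0 : M 0 ≤ M t := hmono t.zero_le Set.self_mem_Iic t.zero_le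
  exact hf.not_ge (by rwa [h.zero, h.last] at hM0)

theorem card_le_sum_div (hd : ∀ s < t, ∀ (x : K) (n : ℕ), v x = ρ s ^ n → d s ∣ n)
    (S : Multiset K[X]) (hS : ∀ q ∈ S, 0 < q.natDegree) (hf : f ≠ 0) (hSf : S.prod ∣ f)
    (h : IsNewtonChain v ρ t f M) :
    S.card ≤ ∑ s ∈ Finset.range t, (M s - M (s + 1)) / d s := by
  induction S using Multiset.induction_on generalizing f M with
  | empty => simp
  | cons q S ih =>
    obtain ⟨r, rfl⟩ := hSf
    rw [Multiset.prod_cons, mul_assoc] at hf h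
    obtain ⟨a, b, ha, hb, hM⟩ := exists_of_mul (left_ne_zero_of_mul hf) (right_ne_zero_of_mul hf) h
    have hadd : ∀ s < t,
        (M s - M (s + 1)) / d s = (a s - a (s + 1)) / d s + (b s - b (s + 1)) / d s := by
      intro s hs
      rw [← Nat.add_div_of_dvd_right (ha.dvd_sub hs (hd s hs)), hM s hs.le, hM (s + 1) hs,
        tsub_add_tsub_comm (ha.succ_le hs) (hb.succ_le hs)]
    rw [Finset.sum_congr rfl fun s hs => hadd s (Finset.mem_range.mp hs), Finset.sum_add_distrib,
      Multiset.card_cons, add_comm S.card]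
    exact add_le_add (ha.one_le_sum_div (hS q (S.mem_cons_self q)) hd)
      (ih (fun q' hq' => hS q' (Multiset.mem_cons_of_mem hq')) (right_ne_zero_of_mul hf)
        (dvd_mul_right _ _) hb)

theorem card_factors_le_sum_div (hd : ∀ s < t, ∀ (x : K) (n : ℕ), v x = ρ s ^ n → d s ∣ n)
    (hf : f ≠ 0) (h : IsNewtonChain v ρ t f M) :
    (UniqueFactorizationMonoid.factors f).card ≤
      ∑ s ∈ Finset.range t, (M s - M (s + 1)) / d s :=
  card_le_sum_div hd _
    (fun _ hq => (UniqueFactorizationMonoid.irreducible_of_factor _ hq).natDegree_pos) hf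
    (UniqueFactorizationMonoid.factors_prod hf).dvd h

theorem comp (h : IsNewtonChain v τ t f M) (hg : g.natDegree ∈ newtonEdge v σ g)
    (h1 : v g.leadingCoeff = 1) (hg0 : 0 < g.natDegree) (hσ : ∀ s < t, σ < ρ s)
    (hτ : ∀ s, ρ s ^ g.natDegree = τ s) :
    IsNewtonChain v ρ t (f.comp g) fun s => g.natDegree * M s where
  pos s hs := zero_le.trans_lt (hσ s hs)
  anti s hs := lt_of_pow_lt_pow_left₀ g.natDegree zero_le (by simpa only [hτ] using h.anti s hs)
  zero := by rw [h.zero, natDegree_comp, mul_comm]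
  last := by rw [h.last, mul_zero]
  left_mem s hs := natDegree_mul_mem_newtonEdge_comp hg h1 hg0 (hσ s hs)
    ((hτ s).symm ▸ h.left_mem s hs)
  right_mem s hs := natDegree_mul_mem_newtonEdge_comp hg h1 hg0 (hσ s hs)
    ((hτ s).symm ▸ h.right_mem s hs)

theorem iterate_comp (h : IsNewtonChain v τ t f M) (hg : g.natDegree ∈ newtonEdge v σ g)
    (h1 : v g.leadingCoeff = 1) (hg0 : 0 < g.natDegree) (hσ : ∀ s < t, σ ^ g.natDegree < τ s)
    (hτ1 : ∀ s < t, τ s ≤ 1) (n : ℕ) (hρ : ∀ s, ρ s ^ g.natDegree ^ n = τ s) :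
    IsNewtonChain v ρ t ((fun q => q.comp g)^[n] f) fun s => g.natDegree ^ n * M s := by
  induction n generalizing ρ with
  | zero =>
    obtain rfl : ρ = τ := funext fun s => by simpa using hρ s
    simpa using h
  | succ n ih =>
    have hN : g.natDegree ^ n ≠ 0 := (pow_pos hg0 n).ne'
    have hρN : ∀ s, (ρ s ^ g.natDegree) ^ g.natDegree ^ n = τ s := fun s => by
      rw [← pow_mul, ← pow_succ', hρ]
    have hρσ : ∀ s < t, σ < ρ s := by
      intro s hs
      have hle : ρ s ^ g.natDegree ≤ 1 :=
        (pow_le_one_iff hN).mp ((hρN s).trans_le (hτ1 s hs))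
      refine lt_of_pow_lt_pow_left₀ g.natDegree zero_le ((hσ s hs).trans_le ?_)
      rw [← hρN s]
      exact pow_le_of_le_one zero_le hle hN
    simpa only [Function.iterate_succ_apply', pow_succ', mul_assoc] using
      (ih hρN).comp hg h1 hg0 hρσ fun _ => rfl

end IsNewtonChain

end NewtonChain

theorem exists_mem_Icc_succ {α : Type*} [LinearOrder α] {x : ℕ → α} {a : α} {t : ℕ} (ht : 0 < t)
    (h0 : x 0 ≤ a) (ha : a ≤ x t) :
    ∃ u < t, a ∈ Set.Icc (x u) (x (u + 1)) := by
  induction t, Nat.succ_le_of_lt ht using Nat.le_induction with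
  | base => exact ⟨0, Nat.one_pos, h0, ha⟩
  | succ t ht' ih =>
    rcases le_total (x t) a with hta | hat
    · exact ⟨t, t.lt_succ_self, hta, ha⟩
    · obtain ⟨u, hu, hmem⟩ := ih ht' hat
      exact ⟨u, hu.trans t.lt_succ_self, hmem⟩

section Chord

variable {F : Type*} [Field F] [LinearOrder F] [IsStrictOrderedRing F] {x : ℕ → ℕ} {y : ℕ → F}
  {s t u : ℕ} {a : F}

/-- The slope of the `s`-th edge of the polygonal chain with vertices `(x s, y s)`. -/
def chordSlope (x : ℕ → ℕ) (y : ℕ → F) (s : ℕ) : F :=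
  (y (s + 1) - y s) / ((x (s + 1) : F) - x s)

/-- The affine function whose graph contains the `s`-th edge of the polygonal chain with vertices
`(x s, y s)`. -/
def chord (x : ℕ → ℕ) (y : ℕ → F) (s : ℕ) (a : F) : F :=
  y s + chordSlope x y s * (a - x s)

theorem chordSlope_mul (hx : x s < x (s + 1)) :
    chordSlope x y s * ((x (s + 1) : F) - x s) = y (s + 1) - y s :=
  div_mul_cancel₀ _ (sub_pos.mpr (Nat.cast_lt.mpr hx)).ne'

theorem chord_succ_sub_chord (hx : x s < x (s + 1)) : chord x y (s + 1) a - chord x y s a =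
    (chordSlope x y (s + 1) - chordSlope x y s) * (a - x (s + 1)) := by
  linear_combination (norm := (rw [chord, chord]; ring)) -chordSlope_mul (y := y) hx

theorem chord_le_chord_of_le (hx : ∀ s < t, x s < x (s + 1))
    (hxy : ∀ s, s + 1 < t → chordSlope x y s ≤ chordSlope x y (s + 1))
    (hsu : s ≤ u) (hut : u < t) (ha : x u ≤ a) : chord x y s a ≤ chord x y u a := by
  induction u, hsu using Nat.le_induction with
  | base => exact le_rfl
  | succ u _ ih =>
    have hu : u < t := u.lt_succ_self.trans hut
    refine (ih hu ((Nat.cast_le.mpr (hx u hu).le).trans ha)).trans (sub_nonneg.mp ?_)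
    rw [chord_succ_sub_chord (hx u hu)]
    exact mul_nonneg (sub_nonneg.mpr (hxy u hut)) (sub_nonneg.mpr ha)

theorem chord_le_chord_of_ge (hx : ∀ s < t, x s < x (s + 1))
    (hxy : ∀ s, s + 1 < t → chordSlope x y s ≤ chordSlope x y (s + 1))
    (hus : u ≤ s) (hst : s < t) (ha : a ≤ x (u + 1)) : chord x y s a ≤ chord x y u a := by
  suffices chord x y s a ≤ chord x y u a ∧ a ≤ x (s + 1) from this.1
  induction s, hus using Nat.le_induction with
  | base => exact ⟨le_rfl, ha⟩
  | succ s _ ih =>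
    have hs : s < t := s.lt_succ_self.trans hst
    obtain ⟨hle, has⟩ := ih hs
    refine ⟨(sub_nonpos.mp ?_).trans hle, has.trans (Nat.cast_le.mpr (hx (s + 1) hst).le)⟩
    rw [chord_succ_sub_chord (hx s hs)]
    exact mul_nonpos_of_nonneg_of_nonpos (sub_nonneg.mpr (hxy s hst)) (sub_nonpos.mpr has)

end Chord

section PadicNewtonPolygon

open WithZero

/-- The `p`-adic valuation in multiplicative notation. Its values are rational instead of integral
powers, so that the slopes of Newton polygons are values too. -/
noncomputable def ratPadicValuation (p : ℕ) [Fact p.Prime] :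
    Valuation ℚ (WithZero (Multiplicative ℚ)) :=
  (Rat.padicValuation p).map (WithZero.map' (Int.castAddHom ℚ).toMultiplicative)
    (WithZero.map'_mono fun _ _ h => Int.cast_mono (R := ℚ) h)

variable {p : ℕ} [Fact p.Prime] {h : ℚ[X]}

theorem ratPadicValuation_apply {c : ℚ} (hc : c ≠ 0) :
    ratPadicValuation p c = exp (-(nuQ p c)) := by
  have hv : Rat.padicValuation p c = exp (-padicValRat p c) := if_neg hc
  rw [ratPadicValuation, Valuation.map_apply, hv, exp, WithZero.map'_coe, exp, nuQ, ← Int.cast_neg]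
  rfl

theorem termValue_ratPadicValuation {μ : ℚ} {i : ℕ} (hi : h.coeff i ≠ 0) :
    termValue (ratPadicValuation p) (exp (-μ)) h i = exp (-(nuQ p (h.coeff i) + μ * i)) := by
  rw [termValue, ratPadicValuation_apply hi, ← exp_nsmul, ← exp_add, nsmul_eq_mul]
  congr 1
  ring

theorem mem_newtonEdge_ratPadicValuation {μ : ℚ} {k : ℕ} (hk : h.coeff k ≠ 0)
    (hle : ∀ i, h.coeff i ≠ 0 → nuQ p (h.coeff k) + μ * k ≤ nuQ p (h.coeff i) + μ * i) :
    k ∈ newtonEdge (ratPadicValuation p) (exp (-μ)) h := by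
  rw [newtonEdge, Set.mem_ofPred_eq, termValue_ratPadicValuation hk]
  refine ⟨exp_pos, fun i => ?_⟩
  by_cases hi : h.coeff i = 0
  · simp [termValue, hi]
  · rw [termValue_ratPadicValuation hi, exp_le_exp, neg_le_neg_iff]
    exact hle i hi

theorem dvd_of_ratPadicValuation_eq_exp_pow {d k : ℕ} {r : ℤ} {μ x : ℚ} (hμ : μ * d = r)
    (hdr : IsCoprime (d : ℤ) r) (hx : ratPadicValuation p x = exp (-μ) ^ k) : d ∣ k := by
  have hx0 : x ≠ 0 := (ratPadicValuation p).ne_zero_iff.mp (hx ▸ pow_ne_zero k exp_ne_zero)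
  rw [ratPadicValuation_apply hx0, ← exp_nsmul, exp_inj, nsmul_eq_mul, nuQ] at hx
  have hq : (d : ℚ) * padicValRat p x = k * r := by
    linear_combination (-d : ℚ) * hx + k * hμ
  exact Int.natCast_dvd_natCast.mp (hdr.dvd_of_dvd_mul_right ⟨_, by exact_mod_cast hq.symm⟩)

end PadicNewtonPolygon

theorem ne_mul_of_isCoprime {D D' e r r' : ℤ} {μ μ' : ℚ} (hμ : μ * D = r) (hμ' : μ' * D' = r')
    (hr : IsCoprime (e * D) r) (h0 : 0 < D') (he : D' < e) : μ ≠ e * μ' := by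
  rintro rfl
  have hq : r * D' = e * (D * r') := by
    have : (r : ℚ) * D' = e * (D * r') := by rw [← hμ, ← hμ']; ring
    exact_mod_cast this
  exact Int.not_le.mpr he (Int.le_of_dvd h0 (hr.of_mul_left_left.dvd_of_dvd_mul_left ⟨_, hq⟩))

theorem iterate_comp_eq_comp_polyIter (f g : ℚ[X]) (n : ℕ) :
    (fun q : ℚ[X] => q.comp g)^[n] f = f.comp (polyIter g n) := by
  induction n generalizing f with
  | zero => exact comp_X.symm
  | succ n ih => rw [Function.iterate_succ_apply, ih, comp_assoc, polyIter]

theorem polyIter_succ_eq_iterate_comp (g : ℚ[X]) (n : ℕ) :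
    polyIter g (n + 1) = (fun q : ℚ[X] => q.comp g)^[n] g :=
  (iterate_comp_eq_comp_polyIter g g n).symm

theorem natDegree_polyIter (g : ℚ[X]) (n : ℕ) : (polyIter g n).natDegree = g.natDegree ^ n := by
  induction n with
  | zero => exact natDegree_X
  | succ n ih => rw [polyIter, natDegree_comp, ih, pow_succ']

theorem numFactors_polyIter_of_natDegree_eq_one {g : ℚ[X]} (hg : g.natDegree = 1) (n : ℕ) :
    numFactors (polyIter g n) = 1 := by
  have hirr : Irreducible (polyIter g n) := irreducible_of_degree_eq_one
    (degree_eq_iff_natDegree_eq_of_pos one_pos |>.mpr (by rw [natDegree_polyIter, hg, one_pow]))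
  exact UniqueFactorizationMonoid.card_factors_of_irreducible hirr

namespace HasNPVertices

variable {p t s i : ℕ} {h : ℚ[X]} {xs M : ℕ → ℕ} {ys : ℕ → ℚ}

theorem lt_succ (hNP : HasNPVertices p h t xs ys) : ∀ s < t, xs s < xs (s + 1) :=
  hNP.2.2.2.1

theorem chordSlope_lt_succ (hNP : HasNPVertices p h t xs ys) :
    ∀ s, s + 1 < t → chordSlope xs ys s < chordSlope xs ys (s + 1) := by
  obtain ⟨_, _, _, _, _, hslope, _⟩ := hNP
  exact fun s hs => hslope (s + 1) s.succ_pos hs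

theorem chord_le_nuQ (hNP : HasNPVertices p h t xs ys) (hs : s < t) (hi : h.coeff i ≠ 0) :
    chord xs ys s (h.natDegree - i) ≤ nuQ p (h.coeff i) := by
  have hslope := fun s hs => (hNP.chordSlope_lt_succ s hs).le
  have hlt := hNP.lt_succ
  obtain ⟨_, hx0, hxt, _, _, _, hedge⟩ := hNP
  obtain ⟨u, hu, hle, hge⟩ := exists_mem_Icc_succ (x := xs) (a := h.natDegree - i)
    (s.zero_le.trans_lt hs) (by omega) (by omega)
  have hnu := hedge (u + 1) u.succ_pos hu i hi hle hge
  rw [← Nat.cast_sub (le_natDegree_of_ne_zero hi)]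
  refine le_trans ?_ hnu
  rcases le_total s u with hsu | hus
  · exact chord_le_chord_of_le hlt hslope hsu hu (Nat.cast_le.mpr hle)
  · exact chord_le_chord_of_ge hlt hslope hus hs (Nat.cast_le.mpr hge)

theorem coeff_ne_zero (hNP : HasNPVertices p h t xs ys) (hM : ∀ s ≤ t, M s + xs s = h.natDegree)
    (hs : s ≤ t) : h.coeff (M s) ≠ 0 := by
  rw [Nat.eq_sub_of_add_eq (hM s hs)]
  exact (hNP.2.2.2.2.1 s hs).1

theorem nuQ_coeff (hNP : HasNPVertices p h t xs ys) (hM : ∀ s ≤ t, M s + xs s = h.natDegree)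
    (hs : s ≤ t) : nuQ p (h.coeff (M s)) = ys s := by
  rw [Nat.eq_sub_of_add_eq (hM s hs)]
  exact (hNP.2.2.2.2.1 s hs).2

theorem zero (hNP : HasNPVertices p h t xs ys) (hM : ∀ s ≤ t, M s + xs s = h.natDegree) :
    M 0 = h.natDegree := by
  simpa only [hNP.2.1, add_zero] using hM 0 t.zero_le

theorem last (hNP : HasNPVertices p h t xs ys) (hM : ∀ s ≤ t, M s + xs s = h.natDegree) :
    M t = 0 :=
  Nat.add_eq_right.mp ((hM t le_rfl).trans hNP.2.2.1.symm)

theorem pos (hNP : HasNPVertices p h t xs ys) (hM : ∀ s ≤ t, M s + xs s = h.natDegree)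
    (hdeg : 0 < h.natDegree) : 0 < t :=
  Nat.pos_of_ne_zero fun ht =>
    hdeg.ne ((hNP.last hM).symm.trans ((congrArg M ht).trans (hNP.zero hM)))

theorem succ_lt (hNP : HasNPVertices p h t xs ys) (hM : ∀ s ≤ t, M s + xs s = h.natDegree)
    (hs : s < t) : M (s + 1) < M s := by
  have hlt := hNP.lt_succ s hs
  have hMs := hM s hs.le
  have hMs1 := hM (s + 1) hs
  omega

theorem chordSlope_mul_sub (hNP : HasNPVertices p h t xs ys)
    (hM : ∀ s ≤ t, M s + xs s = h.natDegree) (hs : s < t) :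
    chordSlope xs ys s * ((M s : ℚ) - M (s + 1)) =
      nuQ p (h.coeff (M (s + 1))) - nuQ p (h.coeff (M s)) := by
  have hMs : (M s : ℚ) + xs s = h.natDegree := by exact_mod_cast hM s hs.le
  have hMs1 : (M (s + 1) : ℚ) + xs (s + 1) = h.natDegree := by exact_mod_cast hM (s + 1) hs
  rw [hNP.nuQ_coeff hM hs.le, hNP.nuQ_coeff hM hs]
  linear_combination chordSlope_mul (y := ys) (hNP.lt_succ s hs) +
    chordSlope xs ys s * (hMs - hMs1)

theorem nuQ_add_chordSlope_mul_le (hNP : HasNPVertices p h t xs ys)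
    (hM : ∀ s ≤ t, M s + xs s = h.natDegree) (hs : s < t) (hi : h.coeff i ≠ 0) :
    nuQ p (h.coeff (M s)) + chordSlope xs ys s * M s ≤
      nuQ p (h.coeff i) + chordSlope xs ys s * i := by
  have hMs : (M s : ℚ) + xs s = h.natDegree := by exact_mod_cast hM s hs.le
  have hle := hNP.chord_le_nuQ hs hi
  rw [chord, ← hMs] at hle
  rw [hNP.nuQ_coeff hM hs.le]
  linarith

theorem isNewtonChain [Fact p.Prime] (hNP : HasNPVertices p h t xs ys)
    (hM : ∀ s ≤ t, M s + xs s = h.natDegree) :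
    IsNewtonChain (ratPadicValuation p) (fun s => WithZero.exp (-chordSlope xs ys s)) t h M where
  pos _ _ := WithZero.exp_pos
  anti s hs := WithZero.exp_lt_exp.mpr (neg_lt_neg (hNP.chordSlope_lt_succ s hs))
  zero := hNP.zero hM
  last := hNP.last hM
  left_mem s hs := mem_newtonEdge_ratPadicValuation (hNP.coeff_ne_zero hM hs.le)
    fun _ => hNP.nuQ_add_chordSlope_mul_le hM hs
  right_mem s hs := mem_newtonEdge_ratPadicValuation (hNP.coeff_ne_zero hM hs) fun i hi => by
    linarith [hNP.nuQ_add_chordSlope_mul_le hM hs hi, hNP.chordSlope_mul_sub hM hs]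

theorem chordSlope_le (hNP : HasNPVertices p h t xs ys)
    (hM : ∀ s ≤ t, M s + xs s = h.natDegree) (h0 : ys 0 = 0)
    (hpos : 0 ≤ chordSlope xs ys 0)
    (hle : ys t ≤ chordSlope xs ys 0 * (2 * h.natDegree - 1)) (hs : s < t) :
    chordSlope xs ys s ≤ h.natDegree * chordSlope xs ys 0 := by
  set μ := chordSlope xs ys
  have hMs : (1 : ℚ) ≤ M s := by exact_mod_cast (Nat.zero_le _).trans_lt (hNP.succ_lt hM hs)
  have hdeg : (1 : ℚ) ≤ h.natDegree := by
    exact_mod_cast ((Nat.zero_le _).trans_lt (hNP.succ_lt hM hs)).trans_le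
      (Nat.le.intro (hM s hs.le))
  have hlast := hNP.nuQ_add_chordSlope_mul_le hM hs hNP.1
  have hfirst := hNP.nuQ_add_chordSlope_mul_le hM (s.zero_le.trans_lt hs)
    (hNP.coeff_ne_zero hM hs.le)
  rw [← hNP.last hM, hNP.nuQ_coeff hM le_rfl, hNP.nuQ_coeff hM hs.le, hNP.last hM] at hlast
  rw [hNP.nuQ_coeff hM t.zero_le, hNP.nuQ_coeff hM hs.le, h0, hNP.zero hM] at hfirst
  refine le_of_mul_le_mul_right ?_ (one_pos.trans_le hMs)
  calc μ s * M s ≤ μ 0 * (h.natDegree - 1 + M s) := by push_cast at hlast; linarith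
    _ ≤ μ 0 * (h.natDegree * M s) := by
      gcongr
      nlinarith [mul_nonneg (sub_nonneg.mpr hdeg) (sub_nonneg.mpr hMs)]
    _ = h.natDegree * μ 0 * M s := by ring

theorem chordSlope_lt (hNP : HasNPVertices p h t xs ys)
    (hM : ∀ s ≤ t, M s + xs s = h.natDegree) (hdeg : 1 < h.natDegree) (h0 : ys 0 = 0)
    (hpos : 0 < chordSlope xs ys 0) (hle : ys t ≤ chordSlope xs ys 0 * (2 * h.natDegree - 1))
    (hs : s < t)
    (hcop : IsCoprime ((h.natDegree : ℤ) * ((M s : ℤ) - M (s + 1)))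
      (padicValRat p (h.coeff (M (s + 1))) - padicValRat p (h.coeff (M s)))) :
    chordSlope xs ys s < h.natDegree * chordSlope xs ys 0 := by
  rcases s.eq_zero_or_pos with rfl | hs0
  · exact lt_mul_of_one_lt_left hpos (by exact_mod_cast hdeg)
  refine (hNP.chordSlope_le hM h0 hpos.le hle hs).lt_of_ne ?_
  have ht : 0 < t := hs0.trans hs
  have hM2 : M (0 + 2) < M (0 + 1) := hNP.succ_lt hM (Nat.lt_of_le_of_lt hs0 hs)
  have hM1 : M (0 + 1) < M 0 := hNP.succ_lt hM ht
  rw [← hNP.zero hM] at hcop ⊢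
  have hmul : ∀ u < t, chordSlope xs ys u * (((M u : ℤ) - M (u + 1) : ℤ) : ℚ) =
      (padicValRat p (h.coeff (M (u + 1))) - padicValRat p (h.coeff (M u)) : ℤ) := fun u hu => by
    push_cast
    exact hNP.chordSlope_mul_sub hM hu
  exact_mod_cast ne_mul_of_isCoprime (hmul s hs) (hmul 0 ht) hcop (by omega) (by omega)

theorem isNewtonChain_polyIter [Fact p.Prime] (hNP : HasNPVertices p h t xs ys)
    (hM : ∀ s ≤ t, M s + xs s = h.natDegree) (hdeg : 0 < h.natDegree) (h0 : ys 0 = 0)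
    (hpos : 0 ≤ chordSlope xs ys 0)
    (hlt : ∀ s < t, chordSlope xs ys s < h.natDegree * chordSlope xs ys 0) (n : ℕ) :
    IsNewtonChain (ratPadicValuation p)
      (fun s => WithZero.exp (-(chordSlope xs ys s / (h.natDegree : ℚ) ^ n))) t
      (polyIter h (n + 1)) (fun s => h.natDegree ^ n * M s) := by
  have hchain := hNP.isNewtonChain hM
  have ht : 0 < t := hNP.pos hM hdeg
  have hmono : MonotoneOn (chordSlope xs ys) (Set.Iio t) :=
    monotoneOn_of_le_add_one Set.ordConnected_Iio fun s _ _ hs => (hNP.chordSlope_lt_succ s hs).le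
  have hlead : ratPadicValuation p h.leadingCoeff = 1 := by
    rw [ratPadicValuation_apply (leadingCoeff_ne_zero.mpr (ne_zero_of_natDegree_gt hdeg)),
      leadingCoeff, ← hNP.zero hM, hNP.nuQ_coeff hM t.zero_le, h0, neg_zero, WithZero.exp_zero]
  rw [polyIter_succ_eq_iterate_comp]
  refine hchain.iterate_comp (hNP.zero hM ▸ hchain.left_mem 0 ht) hlead hdeg (fun s hs => ?_)
    (fun s hs => ?_) n fun s => ?_
  · rw [← WithZero.exp_nsmul, WithZero.exp_lt_exp, nsmul_eq_mul, mul_neg]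
    exact neg_lt_neg (hlt s hs)
  · rw [← WithZero.exp_zero, WithZero.exp_le_exp, neg_nonpos]
    exact hpos.trans (hmono ht hs s.zero_le)
  · rw [← WithZero.exp_nsmul, nsmul_eq_mul, Nat.cast_pow, mul_neg, mul_div_cancel₀]
    exact pow_ne_zero n (Nat.cast_ne_zero.mpr hdeg.ne')

theorem numFactors_polyIter_le_of_chordSlope_lt [Fact p.Prime] (hNP : HasNPVertices p h t xs ys)
    (hM : ∀ s ≤ t, M s + xs s = h.natDegree) (hdeg : 0 < h.natDegree) (h0 : ys 0 = 0)
    (hpos : 0 ≤ chordSlope xs ys 0)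
    (hlt : ∀ s < t, chordSlope xs ys s < h.natDegree * chordSlope xs ys 0)
    (hcop : ∀ s < t, IsCoprime ((h.natDegree : ℤ) * ((M s : ℤ) - M (s + 1)))
      (padicValRat p (h.coeff (M (s + 1))) - padicValRat p (h.coeff (M s)))) (n : ℕ) :
    numFactors (polyIter h (n + 1)) ≤ t := by
  have hchain := hNP.isNewtonChain_polyIter hM hdeg h0 hpos hlt n
  have hne : polyIter h (n + 1) ≠ 0 :=
    ne_zero_of_natDegree_gt (n := 0) (by rw [natDegree_polyIter]; exact pow_pos hdeg _)
  have hwidth : ∀ s < t, 0 < h.natDegree ^ n * (M s - M (s + 1)) := fun s hs =>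
    mul_pos (pow_pos hdeg n) (Nat.sub_pos_of_lt (hNP.succ_lt hM hs))
  refine (hchain.card_factors_le_sum_div
    (d := fun s => h.natDegree ^ n * (M s - M (s + 1))) (fun s hs x k hx => ?_) hne).trans_eq ?_
  · have hdeg0 : (h.natDegree : ℚ) ^ n ≠ 0 := pow_ne_zero n (Nat.cast_ne_zero.mpr hdeg.ne')
    refine dvd_of_ratPadicValuation_eq_exp_pow (r := padicValRat p (h.coeff (M (s + 1))) -
      padicValRat p (h.coeff (M s))) ?_ ?_ hx
    · push_cast [Nat.cast_sub (hNP.succ_lt hM hs).le]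
      rw [← mul_assoc, div_mul_cancel₀ _ hdeg0]
      exact hNP.chordSlope_mul_sub hM hs
    · push_cast [Nat.cast_sub (hNP.succ_lt hM hs).le]
      exact (hcop s hs).of_mul_left_left.pow_left.mul_left (hcop s hs).of_mul_left_right
  · rw [Finset.sum_congr rfl fun s hs => by
      rw [← Nat.mul_sub, Nat.div_self (hwidth s (Finset.mem_range.mp hs))]]
    simp

theorem numFactors_polyIter_le [Fact p.Prime] (hNP : HasNPVertices p h t xs ys)
    (hM : ∀ s ≤ t, M s + xs s = h.natDegree) (hdeg : 0 < h.natDegree) (h0 : ys 0 = 0)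
    (hpos : 0 < chordSlope xs ys 0)
    (hle : ys t ≤ chordSlope xs ys 0 * (2 * h.natDegree - 1))
    (hcop : ∀ s < t, IsCoprime ((h.natDegree : ℤ) * ((M s : ℤ) - M (s + 1)))
      (padicValRat p (h.coeff (M (s + 1))) - padicValRat p (h.coeff (M s)))) (n : ℕ) :
    numFactors (polyIter h (n + 1)) ≤ t := by
  rcases (Nat.succ_le_of_lt hdeg).eq_or_lt with hdeg1 | hdeg1
  · exact (numFactors_polyIter_of_natDegree_eq_one hdeg1.symm _).trans_le (hNP.pos hM hdeg)
  · exact hNP.numFactors_polyIter_le_of_chordSlope_lt hM hdeg h0 hpos.le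
      (fun s hs => hNP.chordSlope_lt hM hdeg1 h0 hpos hle hs (hcop s hs)) hcop n

end HasNPVertices

/-- Section 6.3: under a coprimality condition on the edges, the number of
irreducible factors of every iterate is bounded by the number `t` of edges. -/
theorem iterate_factors_le_edges
    (p : ℕ) (hp : p.Prime)
    (g : Polynomial ℚ) (e t : ℕ) (m : ℕ → ℕ)
    (hge : g.natDegree = e) (he1 : 1 ≤ e)
    (hb0 : g.coeff 0 ≠ 0)
    (hbe : padicValRat p (g.coeff e) = 0)
    (hbi : ∀ i, i < e → g.coeff i ≠ 0 → 1 ≤ padicValRat p (g.coeff i))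
    (hm0 : m 0 = e) (hmt : m t = 0)
    (hmdec : ∀ s, s < t → m (s + 1) < m s)
    (hNPg : HasNPVertices p g t (fun s => e - m s) (fun s => nuQ p (g.coeff (m s))))
    (hbound : nuQ p (g.coeff 0) ≤
      nuQ p (g.coeff (m 1)) / ((e : ℚ) - (m 1 : ℚ)) * (2 * (e : ℚ) - 1))
    (hgcd : ∀ s, s < t →
      Int.gcd ((e : ℤ) * ((m s : ℤ) - (m (s + 1) : ℤ)))
        (padicValRat p (g.coeff (m (s + 1))) - padicValRat p (g.coeff (m s))) = 1) :
    ∀ n : ℕ, 1 ≤ n → numFactors (polyIter g n) ≤ t := by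
  have : Fact p.Prime := ⟨hp⟩
  have hanti : AntitoneOn m (Set.Iic t) :=
    antitoneOn_of_add_one_le Set.ordConnected_Iic fun s _ _ hs => (hmdec s hs).le
  have hM : ∀ s ≤ t, m s + (e - m s) = g.natDegree := fun s hs => by
    rw [Nat.add_sub_cancel' ((hanti t.zero_le hs s.zero_le).trans_eq hm0), hge]
  have hm1 : m 1 < e := hm0 ▸ hmdec 0 (hNPg.pos hM (hge ▸ he1))
  have hr1 : 1 ≤ padicValRat p (g.coeff (m 1)) :=
    hbi _ hm1 (hNPg.coeff_ne_zero hM (hNPg.pos hM (hge ▸ he1)))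
  have h0 : nuQ p (g.coeff (m 0)) = 0 := by rw [hm0, nuQ, hbe, Int.cast_zero]
  have hslope : chordSlope (fun s => e - m s) (fun s => nuQ p (g.coeff (m s))) 0 =
      nuQ p (g.coeff (m 1)) / ((e : ℚ) - m 1) := by
    rw [chordSlope, h0, hm0]
    simp [Nat.cast_sub hm1.le]
  have hpos : 0 < nuQ p (g.coeff (m 1)) / ((e : ℚ) - m 1) :=
    div_pos (Int.cast_pos.mpr hr1) (sub_pos.mpr (Nat.cast_lt.mpr hm1))
  rw [← hslope] at hbound hpos
  subst hge
  rintro (_ | n) hn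
  · contradiction
  · exact hNPg.numFactors_polyIter_le hM he1 h0 hpos (by rwa [hmt])
      (fun s hs => Int.isCoprime_iff_gcd_eq_one.mpr (hgcd s hs)) n
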